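/- Let 𝒢 be a group structure on {1,…,p} with positive weights (η_g), let Ω(w) = Σ_{g∈𝒢} η_g ‖w_g‖_∞, let λ > 0 and u ∈ ℝ^p. A pair (w, ξ), with w ∈ ℝ^p and ξ = (ξ^g)_{g∈𝒢} a family of vectors in ℝ^p, satisfies: w is the minimizer of w' ↦ ½‖u − w'‖₂² + λΩ(w') and ξ is a minimizer of ½‖u − Σ_g ξ^g‖₂² over dual-feasible families at level λ, if and only if ξ is dual-feasible at level λ, w = u − Σ_{g∈𝒢} ξ^g, and for every g ∈ 𝒢 either (⟨w, ξ^g⟩ = ‖w_g‖_∞ · ‖ξ^g‖₁ and ‖ξ^g‖₁ = λη_g) or w_g = 0. -/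

import Mathlib

open Finset

/-- The ℓ∞-norm of the subvector of `w` indexed by the group `g`
(equal to `max_{j ∈ g} |w j|` for nonempty `g`, and `0` for empty `g`). -/
noncomputable def gsup {p : ℕ} (g : Finset (Fin p)) (w : Fin p → ℝ) : ℝ :=
  ↑(g.sup fun j => Real.nnabs (w j))

/-- The structured norm `Ω(w) = ∑_{g ∈ 𝒢} η_g ‖w_g‖_∞`. -/
noncomputable def Omega {p : ℕ} (G : Finset (Finset (Fin p)))
    (η : Finset (Fin p) → ℝ) (w : Fin p → ℝ) : ℝ :=
  ∑ g ∈ G, η g * gsup g w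

/-- ℓ₁-norm of a vector. -/
def l1 {p : ℕ} (v : Fin p → ℝ) : ℝ := ∑ j, |v j|

/-- A family `ξ = (ξ^g)_{g ∈ 𝒢}` is dual-feasible at level `lam` if `ξ^g_j = 0` for
`j ∉ g` and `‖ξ^g‖₁ ≤ lam * η_g` for every `g ∈ 𝒢`. -/
def DualFeasible {p : ℕ} (G : Finset (Finset (Fin p))) (η : Finset (Fin p) → ℝ)
    (lam : ℝ) (ξ : Finset (Fin p) → Fin p → ℝ) : Prop :=
  ∀ g ∈ G, (∀ j, j ∉ g → ξ g j = 0) ∧ l1 (ξ g) ≤ lam * η g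

/-- Primal (proximal) objective `½‖u − w‖₂² + λ Ω(w)`. -/
noncomputable def proxObj {p : ℕ} (G : Finset (Finset (Fin p)))
    (η : Finset (Fin p) → ℝ) (lam : ℝ) (u w : Fin p → ℝ) : ℝ :=
  (1/2) * ∑ j, (u j - w j)^2 + lam * Omega G η w

/-- Dual objective `½‖u − ∑_{g} ξ^g‖₂²`. -/
noncomputable def dualObj {p : ℕ} (G : Finset (Finset (Fin p))) (u : Fin p → ℝ)
    (ξ : Finset (Fin p) → Fin p → ℝ) : ℝ :=
  (1/2) * ∑ j, (u j - ∑ g ∈ G, ξ g j)^2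

/-!
Writing `v = u - ∑ g ∈ G, ξ g`, the duality gap is the exact sum
`½‖w - v‖₂² + ∑ g ∈ G, (λ η_g ‖w_g‖_∞ - ⟨w, ξ^g⟩)`, whose terms are all nonnegative on
dual-feasible families by Hölder's inequality. It therefore vanishes precisely under the optimality
conditions, and a pair with zero gap is optimal on both sides. Conversely, the gap of an optimal
pair is zero: by the variational inequality for the projection of `u` onto the convex set of sums of
dual-feasible families, the dual optimum maximizes the linear form `⟨v, ∑ g ∈ G, ·⟩`, whose maximum
is `λ Ω(v)`.
-/

open scoped Matrix

lemma dotProduct_le_dotProduct_of_forall_sum_sq_sub_le {ι : Type*} [Fintype ι]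
    {K : Set (ι → ℝ)} (hK : Convex ℝ K) {u s t : ι → ℝ} (hs : s ∈ K) (ht : t ∈ K)
    (hmin : ∀ x ∈ K, ∑ j, (u j - s j) ^ 2 ≤ ∑ j, (u j - x j) ^ 2) :
    (u - s) ⬝ᵥ t ≤ (u - s) ⬝ᵥ s := by
  let K₂ : Set (EuclideanSpace ℝ ι) := WithLp.ofLp ⁻¹' K
  have hK₂ : Convex ℝ K₂ := hK.linear_preimage (WithLp.linearEquiv 2 ℝ (ι → ℝ)).toLinearMap
  have hs₂ : WithLp.toLp 2 s ∈ K₂ := hs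
  have : Nonempty K₂ := ⟨_, hs₂⟩
  have hproj : ‖WithLp.toLp 2 u - WithLp.toLp 2 s‖ = ⨅ x : K₂, ‖WithLp.toLp 2 u - x‖ := by
    refine le_antisymm (le_ciInf fun x => ?_)
      (ciInf_le ⟨0, Set.forall_mem_range.2 fun _ => norm_nonneg _⟩ (⟨_, hs₂⟩ : K₂))
    rw [← sq_le_sq₀ (norm_nonneg _) (norm_nonneg _), EuclideanSpace.real_norm_sq_eq,
      EuclideanSpace.real_norm_sq_eq]
    exact hmin _ x.2
  have hvar := (norm_eq_iInf_iff_real_inner_le_zero hK₂ hs₂).1 hproj (WithLp.toLp 2 t) ht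
  rw [← WithLp.toLp_sub, ← WithLp.toLp_sub, EuclideanSpace.inner_toLp_toLp, star_trivial,
    dotProduct_comm, dotProduct_sub] at hvar
  exact sub_nonpos.1 hvar

section Norms

variable {p : ℕ} {g : Finset (Fin p)} {w x : Fin p → ℝ} {c : ℝ}

lemma gsup_nonneg (g : Finset (Fin p)) (w : Fin p → ℝ) : 0 ≤ gsup g w :=
  NNReal.coe_nonneg _

lemma abs_le_gsup {j : Fin p} (hj : j ∈ g) (w : Fin p → ℝ) : |w j| ≤ gsup g w := by
  rw [← Real.coe_nnabs]
  exact NNReal.coe_le_coe.2 (Finset.le_sup (f := fun j => Real.nnabs (w j)) hj)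

lemma exists_abs_eq_gsup (hg : g.Nonempty) (w : Fin p → ℝ) : ∃ j ∈ g, |w j| = gsup g w := by
  obtain ⟨j, hj, hsup⟩ := Finset.exists_mem_eq_sup g hg fun j => Real.nnabs (w j)
  exact ⟨j, hj, by rw [gsup, hsup, Real.coe_nnabs]⟩

lemma gsup_eq_zero_iff : gsup g w = 0 ↔ ∀ j ∈ g, w j = 0 := by
  refine NNReal.coe_eq_zero.trans ((Finset.sup_eq_bot_iff _ g).trans ?_)
  simp only [bot_eq_zero, map_eq_zero]

lemma l1_single (j : Fin p) (a : ℝ) : l1 (Pi.single j a) = |a| := by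
  rw [l1, Finset.sum_eq_single j]
  · rw [Pi.single_eq_same]
  · intro i _ hij
    rw [Pi.single_eq_of_ne hij, abs_zero]
  · simp

lemma convexOn_l1 : ConvexOn ℝ Set.univ (l1 : (Fin p → ℝ) → ℝ) := by
  refine ⟨convex_univ, fun x _ y _ a b ha hb _ => ?_⟩
  simp only [l1, smul_eq_mul, Finset.mul_sum, ← Finset.sum_add_distrib]
  refine Finset.sum_le_sum fun j _ => (abs_add_le _ _).trans_eq ?_
  simp only [Pi.smul_apply, smul_eq_mul, abs_mul, abs_of_nonneg ha, abs_of_nonneg hb]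

lemma dotProduct_le_gsup_mul_l1 (w : Fin p → ℝ) (hx : ∀ j, j ∉ g → x j = 0) :
    w ⬝ᵥ x ≤ gsup g w * l1 x := by
  rw [dotProduct, l1, Finset.mul_sum]
  refine Finset.sum_le_sum fun j _ => ?_
  by_cases hj : j ∈ g
  · calc w j * x j ≤ |w j| * |x j| := (le_abs_self _).trans_eq (abs_mul _ _)
      _ ≤ gsup g w * |x j| := by gcongr; exact abs_le_gsup hj w
  · simp [hx j hj]

lemma dotProduct_le_mul_gsup (w : Fin p → ℝ) (hx : ∀ j, j ∉ g → x j = 0) (hc : l1 x ≤ c) :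
    w ⬝ᵥ x ≤ c * gsup g w :=
  calc w ⬝ᵥ x ≤ gsup g w * l1 x := dotProduct_le_gsup_mul_l1 w hx
    _ ≤ gsup g w * c := mul_le_mul_of_nonneg_left hc (gsup_nonneg g w)
    _ = c * gsup g w := mul_comm _ _

lemma dotProduct_eq_mul_gsup_iff (hx : ∀ j, j ∉ g → x j = 0) (hc : l1 x ≤ c) :
    w ⬝ᵥ x = c * gsup g w ↔
      (w ⬝ᵥ x = gsup g w * l1 x ∧ l1 x = c) ∨ ∀ j ∈ g, w j = 0 := by
  rw [← gsup_eq_zero_iff]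
  have holder := dotProduct_le_gsup_mul_l1 w hx
  constructor
  · intro heq
    rcases (gsup_nonneg g w).eq_or_lt with hzero | hpos
    · exact .inr hzero.symm
    · have hl1 : l1 x = c := hc.antisymm (le_of_mul_le_mul_left (by linarith) hpos)
      exact .inl ⟨by rw [heq, hl1, mul_comm], hl1⟩
  · rintro (⟨heq, hl1⟩ | hzero)
    · rw [heq, hl1, mul_comm]
    · have hw := gsup_eq_zero_iff.1 hzero
      rw [hzero, mul_zero]
      refine Finset.sum_eq_zero fun j _ => ?_
      by_cases hj : j ∈ g
      · rw [hw j hj, zero_mul]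
      · rw [hx j hj, mul_zero]

lemma exists_dotProduct_eq_mul_gsup (g : Finset (Fin p)) (w : Fin p → ℝ) (hc : 0 ≤ c) :
    ∃ x : Fin p → ℝ, (∀ j, j ∉ g → x j = 0) ∧ l1 x ≤ c ∧ w ⬝ᵥ x = c * gsup g w := by
  rcases g.eq_empty_or_nonempty with rfl | hg
  · exact ⟨0, fun _ _ => rfl, by simpa [l1] using hc, by simp [gsup]⟩
  obtain ⟨j, hj, hmax⟩ := exists_abs_eq_gsup hg w
  refine ⟨Pi.single j (c * SignType.sign (w j)), fun i hi => ?_, ?_, ?_⟩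
  · exact Pi.single_eq_of_ne (ne_of_mem_of_not_mem hj hi).symm _
  · have hsign : |(SignType.sign (w j) : ℝ)| ≤ 1 := by
      cases SignType.sign (w j) <;> simp
    rw [l1_single, abs_mul, abs_of_nonneg hc]
    exact mul_le_of_le_one_right hc hsign
  · rw [dotProduct_single, mul_left_comm, self_mul_sign, hmax]

end Norms

section Duality

variable {p : ℕ} {G : Finset (Finset (Fin p))} {η : Finset (Fin p) → ℝ} {lam : ℝ}
  {u w : Fin p → ℝ} {ξ : Finset (Fin p) → Fin p → ℝ}

lemma mul_Omega (G : Finset (Finset (Fin p))) (η : Finset (Fin p) → ℝ) (lam : ℝ)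
    (w : Fin p → ℝ) : lam * Omega G η w = ∑ g ∈ G, lam * η g * gsup g w := by
  simp only [Omega, Finset.mul_sum, mul_assoc]

lemma convex_dualFeasible (G : Finset (Finset (Fin p))) (η : Finset (Fin p) → ℝ) (lam : ℝ) :
    Convex ℝ {ξ | DualFeasible G η lam ξ} := by
  intro ξ hξ ζ hζ a b ha hb hab g hg
  refine ⟨fun j hj => ?_, ?_⟩
  · simp [(hξ g hg).1 j hj, (hζ g hg).1 j hj]
  · exact (convexOn_l1.convex_le _ ⟨trivial, (hξ g hg).2⟩ ⟨trivial, (hζ g hg).2⟩ ha hb hab).2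

lemma DualFeasible.mul_weight_nonneg (hξ : DualFeasible G η lam ξ) : ∀ g ∈ G, 0 ≤ lam * η g :=
  fun g hg => (Finset.sum_nonneg fun _ _ => abs_nonneg _).trans (hξ g hg).2

lemma exists_dualFeasible_dotProduct_sum_eq (hη : ∀ g ∈ G, 0 ≤ lam * η g) (w : Fin p → ℝ) :
    ∃ ξ, DualFeasible G η lam ξ ∧ w ⬝ᵥ ∑ g ∈ G, ξ g = lam * Omega G η w := by
  choose! ξ hsupp hl1 heq using fun g hg => exists_dotProduct_eq_mul_gsup g w (hη g hg)
  refine ⟨ξ, fun g hg => ⟨hsupp g hg, hl1 g hg⟩, ?_⟩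
  rw [dotProduct_sum, mul_Omega]
  exact Finset.sum_congr rfl heq

lemma dotProduct_sum_le_of_forall_dualObj_le (hξ : DualFeasible G η lam ξ)
    (hmin : ∀ ξ', DualFeasible G η lam ξ' → dualObj G u ξ ≤ dualObj G u ξ')
    {ζ : Finset (Fin p) → Fin p → ℝ} (hζ : DualFeasible G η lam ζ) :
    (u - ∑ g ∈ G, ξ g) ⬝ᵥ ∑ g ∈ G, ζ g ≤ (u - ∑ g ∈ G, ξ g) ⬝ᵥ ∑ g ∈ G, ξ g := by
  have hK : Convex ℝ ((fun ξ => ∑ g ∈ G, ξ g) '' {ξ | DualFeasible G η lam ξ}) :=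
    (convex_dualFeasible G η lam).is_linear_image
      ⟨fun _ _ => Finset.sum_add_distrib, fun a ξ => (Finset.smul_sum (r := a) (f := ξ)).symm⟩
  refine dotProduct_le_dotProduct_of_forall_sum_sq_sub_le hK ⟨ξ, hξ, rfl⟩ ⟨ζ, hζ, rfl⟩ ?_
  rintro _ ⟨ξ', hξ', rfl⟩
  simpa [dualObj] using hmin ξ' hξ'

/-- The duality gap of the proximal problem at `(w, ξ)`: the primal problem minimizes `proxObj`,
and its dual maximizes `½‖u‖₂² - dualObj`. -/
noncomputable def dualityGap (G : Finset (Finset (Fin p))) (η : Finset (Fin p) → ℝ) (lam : ℝ)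
    (u w : Fin p → ℝ) (ξ : Finset (Fin p) → Fin p → ℝ) : ℝ :=
  proxObj G η lam u w - ((1 / 2) * ∑ j, u j ^ 2 - dualObj G u ξ)

lemma dualityGap_eq (G : Finset (Finset (Fin p))) (η : Finset (Fin p) → ℝ) (lam : ℝ)
    (u w : Fin p → ℝ) (ξ : Finset (Fin p) → Fin p → ℝ) :
    dualityGap G η lam u w ξ =
      (1 / 2) * ∑ j, (w j - (u j - ∑ g ∈ G, ξ g j)) ^ 2 +
        (lam * Omega G η w - w ⬝ᵥ ∑ g ∈ G, ξ g) := by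
  have hquad : (1 / 2) * ∑ j, (u j - w j) ^ 2 + (1 / 2) * ∑ j, (u j - ∑ g ∈ G, ξ g j) ^ 2 =
      (1 / 2) * ∑ j, u j ^ 2 + (1 / 2) * ∑ j, (w j - (u j - ∑ g ∈ G, ξ g j)) ^ 2 -
        w ⬝ᵥ ∑ g ∈ G, ξ g := by
    simp only [dotProduct, Finset.sum_apply, Finset.mul_sum univ, ← Finset.sum_add_distrib,
      ← Finset.sum_sub_distrib]
    exact Finset.sum_congr rfl fun j _ => by ring
  rw [dualityGap, proxObj, dualObj]
  linarith

lemma dualityGap_eq_sum (G : Finset (Finset (Fin p))) (η : Finset (Fin p) → ℝ) (lam : ℝ)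
    (u w : Fin p → ℝ) (ξ : Finset (Fin p) → Fin p → ℝ) :
    dualityGap G η lam u w ξ =
      (1 / 2) * ∑ j, (w j - (u j - ∑ g ∈ G, ξ g j)) ^ 2 +
        ∑ g ∈ G, (lam * η g * gsup g w - w ⬝ᵥ ξ g) := by
  rw [dualityGap_eq, Finset.sum_sub_distrib, ← mul_Omega, dotProduct_sum]

lemma DualFeasible.sub_dotProduct_nonneg (hξ : DualFeasible G η lam ξ) (w : Fin p → ℝ) :
    ∀ g ∈ G, 0 ≤ lam * η g * gsup g w - w ⬝ᵥ ξ g := fun g hg =>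
  sub_nonneg.2 (dotProduct_le_mul_gsup w (hξ g hg).1 (hξ g hg).2)

lemma DualFeasible.dualityGap_nonneg (hξ : DualFeasible G η lam ξ) (u w : Fin p → ℝ) :
    0 ≤ dualityGap G η lam u w ξ := by
  rw [dualityGap_eq_sum]
  have hslack := Finset.sum_nonneg (hξ.sub_dotProduct_nonneg w)
  positivity

lemma DualFeasible.dualityGap_eq_zero_iff (hξ : DualFeasible G η lam ξ) :
    dualityGap G η lam u w ξ = 0 ↔
      (∀ j, w j = u j - ∑ g ∈ G, ξ g j) ∧
        ∀ g ∈ G, (w ⬝ᵥ ξ g = gsup g w * l1 (ξ g) ∧ l1 (ξ g) = lam * η g) ∨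
          ∀ j ∈ g, w j = 0 := by
  have hslack := hξ.sub_dotProduct_nonneg w
  rw [dualityGap_eq_sum, add_eq_zero_iff_of_nonneg (by positivity) (Finset.sum_nonneg hslack)]
  refine and_congr ?_ ?_
  · rw [mul_eq_zero_iff_left (by norm_num), Finset.sum_eq_zero_iff_of_nonneg fun j _ => sq_nonneg _]
    simp [sub_eq_zero]
  · rw [Finset.sum_eq_zero_iff_of_nonneg hslack]
    refine forall₂_congr fun g hg => ?_
    rw [sub_eq_zero, eq_comm, dotProduct_eq_mul_gsup_iff (hξ g hg).1 (hξ g hg).2]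

lemma dualityGap_residual_nonpos (hξ : DualFeasible G η lam ξ)
    (hmin : ∀ ξ', DualFeasible G η lam ξ' → dualObj G u ξ ≤ dualObj G u ξ') :
    dualityGap G η lam u (u - ∑ g ∈ G, ξ g) ξ ≤ 0 := by
  obtain ⟨ζ, hζ, hζ_eq⟩ :=
    exists_dualFeasible_dotProduct_sum_eq hξ.mul_weight_nonneg (u - ∑ g ∈ G, ξ g)
  have hvar := dotProduct_sum_le_of_forall_dualObj_le hξ hmin hζ
  have hquad : ∑ j, ((u - ∑ g ∈ G, ξ g) j - (u j - ∑ g ∈ G, ξ g j)) ^ 2 = 0 := by simp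
  rw [dualityGap_eq, hquad]
  linarith

theorem DualFeasible.optimal_iff_dualityGap_eq_zero (hξ : DualFeasible G η lam ξ) :
    ((∀ w', proxObj G η lam u w ≤ proxObj G η lam u w') ∧
        ∀ ξ', DualFeasible G η lam ξ' → dualObj G u ξ ≤ dualObj G u ξ') ↔
      dualityGap G η lam u w ξ = 0 := by
  constructor
  · rintro ⟨hw, hmin⟩
    refine le_antisymm ?_ (hξ.dualityGap_nonneg u w)
    calc dualityGap G η lam u w ξ ≤ dualityGap G η lam u (u - ∑ g ∈ G, ξ g) ξ :=
          sub_le_sub_right (hw _) _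
      _ ≤ 0 := dualityGap_residual_nonpos hξ hmin
  · intro hgap
    refine ⟨fun w' => ?_, fun ξ' hξ' => ?_⟩
    · exact (sub_le_sub_iff_right _).1 (hgap.trans_le (hξ.dualityGap_nonneg u w'))
    · have hle := (sub_le_sub_iff_left _).1 (hgap.trans_le (hξ'.dualityGap_nonneg u w))
      exact (sub_le_sub_iff_left _).1 hle

end Duality

/-- optimality conditions for the primal/dual pair of the proximal
problem (Lemma of Jenatton et al.). -/
theorem stmt1 {p : ℕ} (G : Finset (Finset (Fin p))) (η : Finset (Fin p) → ℝ)
    (hne : ∀ g ∈ G, g.Nonempty) (hη : ∀ g ∈ G, 0 < η g)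
    (lam : ℝ) (hlam : 0 < lam) (u : Fin p → ℝ)
    (w : Fin p → ℝ) (ξ : Finset (Fin p) → Fin p → ℝ) :
    ((∀ w' : Fin p → ℝ, proxObj G η lam u w ≤ proxObj G η lam u w') ∧
      DualFeasible G η lam ξ ∧
      (∀ ξ' : Finset (Fin p) → Fin p → ℝ, DualFeasible G η lam ξ' →
        dualObj G u ξ ≤ dualObj G u ξ'))
    ↔
    (DualFeasible G η lam ξ ∧
      (∀ j, w j = u j - ∑ g ∈ G, ξ g j) ∧
      (∀ g ∈ G,
        ((∑ j, w j * ξ g j) = gsup g w * l1 (ξ g) ∧ l1 (ξ g) = lam * η g) ∨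
        (∀ j ∈ g, w j = 0))) := by
  rw [and_left_comm]
  refine and_congr_right fun hξ => ?_
  exact hξ.optimal_iff_dualityGap_eq_zero.trans hξ.dualityGap_eq_zero_iff
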